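/- (Corollary 1, optimal rate of Lipschitz-free mirror descent) Under the setting of Theorem 1 with m = 0 and any fixed a ∈ [0, 1] (i.e., x^1 ∈ Q, ∇f(x^k) ∈ ∂f(x^k), G_k = max_{j=1,…,k}{ ‖∇f(x^j)‖_* j^{(1−a)/2} }, γ_k = √(2σR)/(G_k k^{a/2}), x^{k+1} = argmin_{x ∈ Q} { ⟨∇f(x^k), x⟩ + (1/γ_k) V_ψ(x, x^k) }, and V_ψ(x*, x) ≤ R for all x ∈ Q), the uniform average satisfies f( (1/N) ∑_{k=1}^N x^k ) − f(x*) ≤ 3 √(R/(2σ)) · (1/√N) · max_{k=1,…,N} ‖∇f(x^k)‖_*. -/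

import Mathlib

/-- The Bregman divergence `V_ψ(x, y) = ψ(x) − ψ(y) − ⟨∇ψ(y), x − y⟩` associated with a
differentiable function `ψ` with gradient `ψ'`. -/
noncomputable def bregman {E : Type*} [NormedAddCommGroup E] [NormedSpace ℝ E]
    (ψ : E → ℝ) (ψ' : E → E →L[ℝ] ℝ) (x y : E) : ℝ :=
  ψ x - ψ y - ψ' y (x - y)

/-- `g` is a subgradient of `f` at `x` relative to `Q`. -/
def IsSubgradientAt {E : Type*} [NormedAddCommGroup E] [NormedSpace ℝ E]
    (f : E → ℝ) (Q : Set E) (g : E →L[ℝ] ℝ) (x : E) : Prop :=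
  ∀ y ∈ Q, f x + g (y - x) ≤ f y

section MirrorDescent

variable {E : Type*} [NormedAddCommGroup E] [NormedSpace ℝ E]

/-- First-order optimality condition on a convex set. -/
lemma IsMinOn.fderivWithin_apply_sub_nonneg {Q : Set E} (hQ : Convex ℝ Q) {φ : E → ℝ}
    {φ' : E →L[ℝ] ℝ} {u z : E} (hu : u ∈ Q) (hz : z ∈ Q) (hmin : IsMinOn φ Q u)
    (hφ : HasFDerivWithinAt φ φ' Q u) : 0 ≤ φ' (z - u) :=
  hmin.localize.hasFDerivWithinAt_nonneg hφ
    (sub_mem_posTangentConeAt_of_segment_subset (hQ.segment_subset hu hz))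

/-- The Bregman divergence of a `σ`-strongly convex function dominates `σ / 2 * ‖z - y‖ ^ 2`. -/
lemma StrongConvexOn.le_bregman {Q : Set E} {ψ : E → ℝ} {ψ' : E → E →L[ℝ] ℝ} {σ : ℝ}
    (hψ : StrongConvexOn Q σ ψ) {y z : E} (hy : y ∈ Q) (hz : z ∈ Q)
    (hd : HasFDerivWithinAt ψ (ψ' y) Q y) :
    σ / 2 * ‖z - y‖ ^ 2 ≤ bregman ψ ψ' z y := by
  set c := σ / 2 * ‖z - y‖ ^ 2 with hc
  have hmaps : Set.MapsTo (fun t : ℝ => y + t • (z - y)) (Set.Icc 0 1) Q :=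
    fun t ht => hψ.1.add_smul_sub_mem hy hz ht
  have hline : HasDerivWithinAt (fun t : ℝ => y + t • (z - y)) (z - y) (Set.Icc 0 1) 0 := by
    simpa using (((hasDerivAt_id (0 : ℝ)).smul_const (z - y)).const_add y).hasDerivWithinAt
  have hcomp : HasDerivWithinAt (fun t : ℝ => ψ (y + t • (z - y))) (ψ' y (z - y))
      (Set.Icc 0 1) 0 :=
    HasFDerivWithinAt.comp_hasDerivWithinAt (t := Q) (0 : ℝ) (by simpa using hd) hline hmaps
  have hpoly : HasDerivAt (fun t : ℝ => (1 - t) * ψ y + t * ψ z - (1 - t) * t * c)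
      (ψ z - ψ y - c) 0 := by
    have hid := hasDerivAt_id (0 : ℝ)
    have hsub := hid.const_sub 1
    refine (((hsub.mul_const (ψ y)).add (hid.mul_const (ψ z))).sub
      ((hsub.mul hid).mul_const c)).congr_deriv ?_
    simp only [id_eq]
    ring
  have hmin : IsMinOn (fun t : ℝ => (1 - t) * ψ y + t * ψ z - (1 - t) * t * c
      - ψ (y + t • (z - y))) (Set.Icc 0 1) 0 := by
    intro t ht
    have h := hψ.2 hy hz (sub_nonneg.2 ht.2) ht.1 (sub_add_cancel 1 t)
    have he : (1 - t) • y + t • z = y + t • (z - y) := by module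
    rw [he, norm_sub_rev] at h
    simp only [smul_eq_mul, ← hc] at h
    simp only [Set.mem_ofPred_eq, zero_smul, add_zero]
    linarith
  have h := IsMinOn.fderivWithin_apply_sub_nonneg (convex_Icc (0 : ℝ) 1) (z := 1)
    (by simp) (by simp) hmin (hpoly.hasDerivWithinAt.sub hcomp).hasFDerivWithinAt
  simp at h
  unfold bregman
  rw [map_sub]
  linarith

/-- One step of mirror descent with inverse step size `β`. -/
lemma mirror_descent_step {Q : Set E} (hQ : Convex ℝ Q) {ψ : E → ℝ} {ψ' : E → E →L[ℝ] ℝ}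
    {σ : ℝ} (hσ : 0 < σ) (hd : ∀ x ∈ Q, HasFDerivWithinAt ψ (ψ' x) Q x)
    (hψ : StrongConvexOn Q σ ψ) {x u z : E} (hx : x ∈ Q) (hu : u ∈ Q) (hz : z ∈ Q)
    (g : E →L[ℝ] ℝ) {β : ℝ} (hβ : 0 < β)
    (hmin : IsMinOn (fun w => g w + β * bregman ψ ψ' w x) Q u) :
    g (x - z) ≤ β * (bregman ψ ψ' z x - bregman ψ ψ' z u) + ‖g‖ ^ 2 / (2 * σ * β) := by
  have hV : HasFDerivWithinAt (fun w => g w + β * bregman ψ ψ' w x)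
      (g + β • (ψ' u - ψ' x)) Q u := by
    unfold bregman
    have hlin : HasFDerivWithinAt (fun w => ψ' x (w - x)) (ψ' x) Q u := by
      simpa only [map_sub] using ((ψ' x).hasFDerivWithinAt (s := Q) (x := u)).sub_const (ψ' x x)
    exact g.hasFDerivWithinAt.add ((((hd u hu).sub_const (ψ x)).sub hlin).const_mul β)
  have hopt := hmin.fderivWithin_apply_sub_nonneg hQ hu hz hV
  have hlow := hψ.le_bregman hx hu (hd x hx)
  have hnorm : g (x - u) ≤ ‖g‖ * ‖u - x‖ := by
    rw [norm_sub_rev]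
    exact (le_abs_self _).trans (g.le_opNorm _)
  have hyoung : ‖g‖ * ‖u - x‖ ≤ ‖g‖ ^ 2 / (2 * σ * β) + β * (σ / 2 * ‖u - x‖ ^ 2) := by
    have h : ‖g‖ ^ 2 / (2 * σ * β) + β * (σ / 2 * ‖u - x‖ ^ 2) - ‖g‖ * ‖u - x‖
        = (‖g‖ - σ * β * ‖u - x‖) ^ 2 / (2 * σ * β) := by
      field_simp
      ring
    have : 0 ≤ (‖g‖ - σ * β * ‖u - x‖) ^ 2 / (2 * σ * β) := by positivity
    linarith
  have hmul := mul_le_mul_of_nonneg_left hlow hβ.le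
  simp only [add_apply, smul_apply, sub_apply, smul_eq_mul, map_sub] at hopt
  unfold bregman at *
  simp only [map_sub] at *
  linarith

end MirrorDescent

lemma one_div_sqrt_succ_le (n : ℕ) :
    1 / √((n + 1 : ℕ) : ℝ) ≤ 2 * (√((n + 1 : ℕ) : ℝ) - √(n : ℝ)) := by
  have hp : 0 < √((n + 1 : ℕ) : ℝ) := Real.sqrt_pos.2 (by positivity)
  have h1 := Real.sq_sqrt (Nat.cast_nonneg (α := ℝ) (n + 1))
  have h2 := Real.sq_sqrt (Nat.cast_nonneg (α := ℝ) n)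
  push_cast at *
  rw [div_le_iff₀ hp]
  nlinarith [sq_nonneg (√((n : ℝ) + 1) - √(n : ℝ))]

/-- **Corollary 1 (optimal rate of Lipschitz-free mirror descent).** Under the setting of
Theorem 1 with `m = 0`, the uniform average satisfies
`f((1/N) ∑ x^k) − f(x*) ≤ 3 √(R/(2σ)) · (1/√N) · max_k ‖∇f(x^k)‖_*`. -/
theorem lipschitz_free_mirror_descent_optimal_rate
    {E : Type*} [NormedAddCommGroup E] [NormedSpace ℝ E] [FiniteDimensional ℝ E]
    (Q : Set E) (hQcomp : IsCompact Q) (hQconv : Convex ℝ Q)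
    (ψ : E → ℝ) (ψ' : E → E →L[ℝ] ℝ) (σ : ℝ) (hσ : 0 < σ)
    (hψdiff : ∀ x ∈ Q, HasFDerivWithinAt ψ (ψ' x) Q x)
    (hψstrong : StrongConvexOn Q σ ψ)
    (f : E → ℝ) (hfconv : ConvexOn ℝ Q f) (hfcont : ContinuousOn f Q)
    (xstar : E) (hxstarQ : xstar ∈ Q) (hxstar : IsMinOn f Q xstar)
    (R : ℝ) (hR : 0 < R) (hbound : ∀ x ∈ Q, bregman ψ ψ' xstar x ≤ R)
    (a : ℝ) (ha0 : 0 ≤ a) (ha1 : a ≤ 1)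
    (N : ℕ) (hN : 1 ≤ N)
    (x : ℕ → E) (gf : ℕ → E →L[ℝ] ℝ) (G γ : ℕ → ℝ)
    (hx1 : x 1 ∈ Q)
    (hsub : ∀ k, 1 ≤ k → k ≤ N → IsSubgradientAt f Q (gf k) (x k))
    (hgf : ∀ k, 1 ≤ k → k ≤ N → gf k ≠ 0)
    (hG : ∀ k (hk : 1 ≤ k), k ≤ N →
      G k = (Finset.Icc 1 k).sup' (Finset.nonempty_Icc.mpr hk)
        (fun j => ‖gf j‖ * (j : ℝ) ^ ((1 - a) / 2)))
    (hγ : ∀ k, 1 ≤ k → k ≤ N →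
      γ k = Real.sqrt (2 * σ * R) / (G k * (k : ℝ) ^ (a / 2)))
    (hstep : ∀ k, 1 ≤ k → k ≤ N → x (k + 1) ∈ Q ∧
      IsMinOn (fun z => gf k z + (1 / γ k) * bregman ψ ψ' z (x k)) Q (x (k + 1))) :
    f (((N : ℝ))⁻¹ • ∑ k ∈ Finset.Icc 1 N, x k) - f xstar ≤
      3 * Real.sqrt (R / (2 * σ)) * (1 / Real.sqrt N)
        * (Finset.Icc 1 N).sup' (Finset.nonempty_Icc.mpr hN) (fun k => ‖gf k‖) := by
  set M := (Finset.Icc 1 N).sup' (Finset.nonempty_Icc.mpr hN) (fun k => ‖gf k‖) with hM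
  set C := √(R / (2 * σ)) with hC
  set s := √(2 * σ * R) with hs
  have hCpos : 0 < C := Real.sqrt_pos.2 (by positivity)
  have hspos : 0 < s := Real.sqrt_pos.2 (by positivity)
  have hsR : C * s = R := by
    rw [hC, hs, ← Real.sqrt_mul (by positivity),
      show R / (2 * σ) * (2 * σ * R) = R ^ 2 by field_simp, Real.sqrt_sq hR.le]
  have hsC : s = 2 * σ * C := by
    have hCsq : C ^ 2 = R / (2 * σ) := Real.sq_sqrt (by positivity)
    refine mul_left_cancel₀ hCpos.ne' ?_
    rw [hsR, show C * (2 * σ * C) = 2 * σ * C ^ 2 by ring, hCsq]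
    field_simp
  have hgM : ∀ k, 1 ≤ k → k ≤ N → ‖gf k‖ ≤ M := fun k h1 h2 =>
    Finset.le_sup' (fun k => ‖gf k‖) (Finset.mem_Icc.2 ⟨h1, h2⟩)
  have hMpos : 0 < M := (norm_pos_iff.2 (hgf 1 le_rfl hN)).trans_le (hgM 1 le_rfl hN)
  have hxQ : ∀ k, 1 ≤ k → k ≤ N + 1 → x k ∈ Q := by
    intro k h1 h2
    rcases Nat.exists_eq_add_of_le' h1 with ⟨j, rfl⟩
    rcases Nat.eq_zero_or_pos j with rfl | hj
    · exact hx1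
    · exact (hstep j hj (by omega)).1
  have hsqrt : ∀ k : ℕ, 1 ≤ k →
      (k : ℝ) ^ ((1 - a) / 2) * (k : ℝ) ^ (a / 2) = √(k : ℝ) := by
    intro k hk
    rw [← Real.rpow_add (by exact_mod_cast hk), Real.sqrt_eq_rpow]
    congr 1
    ring
  have hle : ∀ k, 1 ≤ k → k ≤ N → ‖gf k‖ * √(k : ℝ) ≤ G k * (k : ℝ) ^ (a / 2) := by
    intro k h1 h2
    rw [← hsqrt k h1, ← mul_assoc, hG k h1 h2]
    gcongr
    exact Finset.le_sup' (fun j : ℕ => ‖gf j‖ * (j : ℝ) ^ ((1 - a) / 2))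
      (Finset.mem_Icc.2 ⟨h1, le_rfl⟩)
  have hGle : G N * (N : ℝ) ^ (a / 2) ≤ M * √(N : ℝ) := by
    rw [← hsqrt N hN, ← mul_assoc, hG N hN le_rfl]
    gcongr
    refine Finset.sup'_le _ _ fun j hj => ?_
    obtain ⟨hj1, hj2⟩ := Finset.mem_Icc.1 hj
    gcongr
    exact hgM j hj1 hj2
  have hDpos : ∀ k, 1 ≤ k → k ≤ N → 0 < G k * (k : ℝ) ^ (a / 2) := by
    intro k h1 h2
    refine lt_of_lt_of_le (mul_pos (norm_pos_iff.2 (hgf k h1 h2)) ?_) (hle k h1 h2)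
    exact Real.sqrt_pos.2 (by exact_mod_cast h1)
  have hmono : ∀ k, 1 ≤ k → k + 1 ≤ N →
      G k * (k : ℝ) ^ (a / 2) ≤ G (k + 1) * ((k + 1 : ℕ) : ℝ) ^ (a / 2) := by
    intro k h1 h2
    have hGk : G k ≤ G (k + 1) := by
      rw [hG k h1 (by omega), hG (k + 1) (by omega) h2]
      exact Finset.sup'_mono _ (Finset.Icc_subset_Icc_right (by omega)) _
    have hGpos : 0 < G (k + 1) :=
      pos_of_mul_pos_left (hDpos (k + 1) (by omega) h2) (by positivity)
    gcongr
    omega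
  have hγinv : ∀ k, 1 ≤ k → k ≤ N → 1 / γ k = G k * (k : ℝ) ^ (a / 2) / s := by
    intro k h1 h2
    rw [hγ k h1 h2, one_div_div]
  set β : ℕ → ℝ := fun k => G k * (k : ℝ) ^ (a / 2) / s with hβ
  have hone : ∀ k, 1 ≤ k → k ≤ N → gf k (x k - xstar) ≤
      β k * (bregman ψ ψ' xstar (x k) - bregman ψ ψ' xstar (x (k + 1)))
        + C * M * (1 / √(k : ℝ)) := by
    intro k h1 h2
    have hD := hDpos k h1 h2
    obtain ⟨hu, hmin⟩ := hstep k h1 h2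
    rw [hγinv k h1 h2] at hmin
    refine (mirror_descent_step hQconv hσ hψdiff hψstrong (hxQ k h1 (by omega)) hu hxstarQ
      (gf k) (div_pos hD hspos) hmin).trans ?_
    gcongr
    have hkpos : 0 < √(k : ℝ) := Real.sqrt_pos.2 (by exact_mod_cast h1)
    have hg : 0 < ‖gf k‖ := norm_pos_iff.2 (hgf k h1 h2)
    calc ‖gf k‖ ^ 2 / (2 * σ * (G k * (k : ℝ) ^ (a / 2) / s))
        ≤ ‖gf k‖ ^ 2 / (2 * σ * (‖gf k‖ * √(k : ℝ) / s)) := by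
          refine div_le_div_of_nonneg_left (by positivity) (by positivity) ?_
          exact mul_le_mul_of_nonneg_left (div_le_div_of_nonneg_right (hle k h1 h2) hspos.le)
            (by positivity)
      _ = C * ‖gf k‖ * (1 / √(k : ℝ)) := by
          rw [hsC]
          field_simp
      _ ≤ C * M * (1 / √(k : ℝ)) := by
          gcongr
          exact hgM k h1 h2
  have hsum : ∀ n, 1 ≤ n → n ≤ N → ∑ k ∈ Finset.Icc 1 n, gf k (x k - xstar) ≤
      β n * (R - bregman ψ ψ' xstar (x (n + 1))) + 2 * C * M * √(n : ℝ) := by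
    intro n h1
    induction n, h1 using Nat.le_induction with
    | base =>
      intro _
      have h := hone 1 le_rfl hN
      have hβ1 : 0 ≤ β 1 := (div_pos (hDpos 1 le_rfl hN) hspos).le
      have hb := mul_le_mul_of_nonneg_left (hbound (x 1) hx1) hβ1
      have hCM : 0 < C * M := mul_pos hCpos hMpos
      simp only [Finset.Icc_self, Finset.sum_singleton, Nat.cast_one, Real.sqrt_one] at h ⊢
      linarith
    | succ n h1 ih =>
      intro h2
      have hi := ih (by omega)
      have h := hone (n + 1) (by omega) h2
      rw [Finset.sum_Icc_succ_top (by omega)]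
      have hββ : β n ≤ β (n + 1) := div_le_div_of_nonneg_right (hmono n h1 h2) hspos.le
      have hb := mul_le_mul_of_nonneg_right hββ
        (sub_nonneg.2 (hbound (x (n + 1)) (hxQ (n + 1) (by omega) (by omega))))
      have hq := mul_le_mul_of_nonneg_left (one_div_sqrt_succ_le n) (mul_pos hCpos hMpos).le
      linarith
  have hVnonneg : 0 ≤ bregman ψ ψ' xstar (x (N + 1)) := by
    have hxN := hxQ (N + 1) (by omega) le_rfl
    exact le_trans (by positivity) (hψstrong.le_bregman hxN hxstarQ (hψdiff _ hxN))
  have hNpos : (0 : ℝ) < N := by exact_mod_cast hN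
  have htotal : ∑ k ∈ Finset.Icc 1 N, gf k (x k - xstar) ≤ 3 * C * M * √(N : ℝ) := by
    have hβN : 0 ≤ β N := (div_pos (hDpos N hN le_rfl) hspos).le
    have hlast : β N * R ≤ C * M * √(N : ℝ) := by
      calc β N * R ≤ M * √(N : ℝ) / s * R := by
            gcongr
            exact div_le_div_of_nonneg_right hGle hspos.le
        _ = C * M * √(N : ℝ) := by
            rw [← hsR]
            field_simp
    have hdrop := mul_nonneg hβN hVnonneg
    have h := hsum N hN le_rfl
    linarith
  have hjensen : f ((N : ℝ)⁻¹ • ∑ k ∈ Finset.Icc 1 N, x k)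
      ≤ (N : ℝ)⁻¹ * ∑ k ∈ Finset.Icc 1 N, f (x k) := by
    rw [Finset.smul_sum, Finset.mul_sum]
    refine hfconv.map_sum_le (fun _ _ => by positivity) ?_ fun k hk => ?_
    · simp [hNpos.ne']
    · obtain ⟨h1, h2⟩ := Finset.mem_Icc.1 hk
      exact hxQ k h1 (by omega)
  have hgap : ∑ k ∈ Finset.Icc 1 N, f (x k) - N * f xstar
      ≤ ∑ k ∈ Finset.Icc 1 N, gf k (x k - xstar) := by
    have hconst : N * f xstar = ∑ k ∈ Finset.Icc 1 N, f xstar := by simp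
    rw [hconst, ← Finset.sum_sub_distrib]
    refine Finset.sum_le_sum fun k hk => ?_
    obtain ⟨h1, h2⟩ := Finset.mem_Icc.1 hk
    have h := hsub k h1 h2 xstar hxstarQ
    simp only [map_sub] at h ⊢
    linarith
  have hsq : √(N : ℝ) * √(N : ℝ) = N := Real.mul_self_sqrt hNpos.le
  have hsqpos : 0 < √(N : ℝ) := Real.sqrt_pos.2 hNpos
  calc f ((N : ℝ)⁻¹ • ∑ k ∈ Finset.Icc 1 N, x k) - f xstar
      ≤ (N : ℝ)⁻¹ * (∑ k ∈ Finset.Icc 1 N, f (x k) - N * f xstar) := by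
        rw [mul_sub, inv_mul_cancel_left₀ hNpos.ne']
        linarith
    _ ≤ (N : ℝ)⁻¹ * (3 * C * M * √(N : ℝ)) := by
        gcongr
        exact hgap.trans htotal
    _ = 3 * C * (1 / √(N : ℝ)) * M := by
        rw [← hsq, Real.sqrt_mul_self hsqpos.le]
        field_simp
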